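/- Let S_n be the star with central vertex r and leaves V', let 𝒫 be a path cover of a graph on V' (a set of vertex-disjoint simple paths covering all of V'), and let G = S_n + 𝒫 be the unweighted graph obtained by adding all edges of the paths of 𝒫 to S_n. If u and v are the two (distinct) endpoints of the same path of 𝒫, then the effective resistance satisfies R_G(u,v) < √5 − 1. -/

import Mathlib

open Matrix

/-- The Laplacian matrix of a weighted graph given by a weight function. -/
def lapG {V : Type*} [Fintype V] [DecidableEq V] (W : V → V → ℝ) : Matrix V V ℝ :=
  fun i j => if i = j then ∑ k, W i k else -(W i j)

/-- The star graph `S_n`: the central vertex is `Fin.last n`, joined to the `n`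
leaves `0, …, n-1` by unit-weight edges. -/
def starW (n : ℕ) : Fin (n + 1) → Fin (n + 1) → ℝ :=
  fun i j => if i ≠ j ∧ (i = Fin.last n ∨ j = Fin.last n) then 1 else 0

/-- The star `S_n` plus, for each list `l ∈ Ps` of leaves, the path consisting of
unit-weight edges between consecutive vertices of `l`. -/
def starPlusPaths (n : ℕ) (Ps : List (List (Fin n))) : Fin (n + 1) → Fin (n + 1) → ℝ :=
  fun i j => starW n i j +
    if ∃ a b : Fin n, i = a.castSucc ∧ j = b.castSucc ∧
        ∃ l ∈ Ps, ((a, b) ∈ l.zip l.tail ∨ (b, a) ∈ l.zip l.tail) then 1 else 0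

/-- `Ps` is a path cover of the leaf set: each member is a nonempty duplicate-free
list of leaves, the members are pairwise vertex-disjoint, and every leaf is covered. -/
def IsPathCover (n : ℕ) (Ps : List (List (Fin n))) : Prop :=
  (∀ l ∈ Ps, l ≠ [] ∧ l.Nodup) ∧
    Ps.Pairwise (fun l₁ l₂ => ∀ x ∈ l₁, x ∉ l₂) ∧
    (∀ v : Fin n, ∃ l ∈ Ps, v ∈ l)

/-!
The resistance between the ends of a path depends only on the fan formed by the path and the hub.
Measure potentials relative to the hub and push a unit current through the path. Ohm's law along
the path and Kirchhoff's law at its vertices say that the sequence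
(current, potential, current, potential, …) read along the path satisfies the Fibonacci recurrence
run backwards, so for `k` path vertices the end potentials are `±(F₂ₖ₋₁ - 1) / F₂ₖ` and the
resistance is `2 (F₂ₖ₋₁ - 1) / F₂ₖ`. The conjugate `ψ` of the golden ratio satisfies
`ψ F₂ₖ + F₂ₖ₋₁ = ψ²ᵏ < 1`, so the resistance is less than `-2ψ = √5 - 1`.
-/

section Ladder

variable {R : Type*} [CommRing R] {pot cur : ℕ → R} {m : ℕ}

/-- A flow on a ladder of `m + 1` nodes, each grounded through a unit resistor and joined to the
next by a unit resistor. Here `pot i` is the potential of node `i`, `cur (i + 1)` is the current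
from node `i` to node `i + 1`, and `cur 0`, `cur (m + 1)` are the currents entering at node `0` and
leaving at node `m`. -/
structure IsLadderFlow (pot cur : ℕ → R) (m : ℕ) : Prop where
  kirchhoff : ∀ i ≤ m, cur (i + 1) = cur i - pot i
  ohm : ∀ i < m, pot (i + 1) = pot i - cur (i + 1)

namespace IsLadderFlow

theorem reverse (h : IsLadderFlow pot cur m) :
    IsLadderFlow (fun i ↦ -pot (m - i)) (fun i ↦ cur (m + 1 - i)) m where
  kirchhoff i hi := by
    have hnode := h.kirchhoff (m - i) (m.sub_le i)
    rw [← Nat.sub_add_comm hi] at hnode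
    rw [Nat.add_sub_add_right, hnode]
    ring
  ohm i hi := by
    obtain ⟨j, rfl⟩ : ∃ j, m = i + j + 1 := Nat.exists_eq_add_of_lt hi
    have hlink := h.ohm j (by lia)
    rw [show i + j + 1 - (i + 1) = j by lia, show i + j + 1 - i = j + 1 by lia,
      show i + j + 1 + 1 - (i + 1) = j + 1 by lia, hlink]
    ring

theorem cur_succ_and_pot_eq (h : IsLadderFlow pot cur m) : ∀ i ≤ m,
    cur (i + 1) = Nat.fib (2 * i + 1) * cur 0 - Nat.fib (2 * i + 2) * pot 0 ∧
      pot i = Nat.fib (2 * i + 1) * pot 0 - Nat.fib (2 * i) * cur 0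
  | 0, hm => by simp [h.kirchhoff 0 hm]
  | i + 1, hi => by
    obtain ⟨hcur, hpot⟩ := h.cur_succ_and_pot_eq i (by lia)
    have hpot' : pot (i + 1) =
        Nat.fib (2 * i + 3) * pot 0 - Nat.fib (2 * i + 2) * cur 0 := by
      rw [h.ohm i hi, hcur, hpot, Nat.fib_add_two (n := 2 * i + 1), Nat.fib_add_two (n := 2 * i)]
      push_cast
      ring
    refine ⟨?_, hpot'⟩
    rw [h.kirchhoff (i + 1) hi, hcur, hpot', show 2 * (i + 1) + 2 = 2 * i + 2 + 2 by ring,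
      show 2 * (i + 1) + 1 = 2 * i + 1 + 2 by ring, Nat.fib_add_two (n := 2 * i + 2),
      Nat.fib_add_two (n := 2 * i + 1)]
    push_cast
    ring

theorem fib_mul_pot_zero (h : IsLadderFlow pot cur m) :
    Nat.fib (2 * m + 2) * pot 0 = Nat.fib (2 * m + 1) * cur 0 - cur (m + 1) := by
  linear_combination (h.cur_succ_and_pot_eq m le_rfl).1

theorem fib_mul_pot_zero_sub_pot (h : IsLadderFlow pot cur m) :
    Nat.fib (2 * m + 2) * (pot 0 - pot m) =
      (Nat.fib (2 * m + 1) - 1) * (cur 0 + cur (m + 1)) := by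
  have hrev := h.reverse.fib_mul_pot_zero
  simp only [Nat.sub_zero, Nat.sub_self] at hrev
  linear_combination h.fib_mul_pot_zero + hrev

end IsLadderFlow

end Ladder

theorem two_mul_fib_sub_one_div_fib_succ_lt (n : ℕ) :
    2 * ((Nat.fib n : ℝ) - 1) / Nat.fib (n + 1) < √5 - 1 := by
  have habs : |Real.goldenConj| < 1 :=
    abs_lt.2 ⟨Real.neg_one_lt_goldenConj, Real.goldenConj_neg.trans zero_lt_one⟩
  have hpow : Real.goldenConj ^ (n + 1) < 1 := by
    refine (le_abs_self _).trans_lt ?_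
    rw [abs_pow]
    exact pow_lt_one₀ (abs_nonneg _) habs n.succ_ne_zero
  have hpos : (0 : ℝ) < Nat.fib (n + 1) := Nat.cast_pos.2 (Nat.fib_pos.2 n.succ_pos)
  have hsqrt : √5 - 1 = -2 * Real.goldenConj := by ring
  rw [div_lt_iff₀ hpos, hsqrt]
  linarith [Real.goldenConj_mul_fib_succ_add_fib n]

section ConsecutivePairs

variable {α : Type*} {l : List α} {a b : α} {i : ℕ}

theorem mem_consecutivePairs_iff :
    (a, b) ∈ l.consecutivePairs ↔ ∃ i, l[i]? = some a ∧ l[i + 1]? = some b := by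
  simp [List.mem_iff_getElem?, List.getElem?_zip_eq_some]

theorem mem_consecutivePairs_map_iff {β : Type*} {f : α → β} (hf : f.Injective) :
    (f a, f b) ∈ (l.map f).consecutivePairs ↔ (a, b) ∈ l.consecutivePairs := by
  rw [List.consecutivePairs, ← List.map_tail, List.zip_map]
  exact List.mem_map_of_injective (hf.prodMap hf) (a := (a, b))

theorem mem_of_mem_consecutivePairs (h : (a, b) ∈ l.consecutivePairs) : a ∈ l ∧ b ∈ l :=
  (List.of_mem_zip h).imp_right List.mem_of_mem_tail

theorem getElem_mem_consecutivePairs_iff (hl : l.Nodup) (hi : i < l.length) :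
    (l[i], b) ∈ l.consecutivePairs ↔ l[i + 1]? = some b := by
  rw [mem_consecutivePairs_iff]
  constructor
  · rintro ⟨j, hj, hb⟩
    rw [← List.getElem?_eq_getElem hi, eq_comm, List.getElem?_inj hi hl] at hj
    rwa [hj]
  · exact fun hb ↦ ⟨i, List.getElem?_eq_getElem hi, hb⟩

theorem mem_consecutivePairs_getElem_iff (hl : l.Nodup) (hi : i < l.length) :
    (a, l[i]) ∈ l.consecutivePairs ↔ ∃ j, j + 1 = i ∧ l[j]? = some a := by
  rw [mem_consecutivePairs_iff]
  refine exists_congr fun j ↦ ?_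
  rw [← List.getElem?_eq_getElem hi, eq_comm (a := l[j + 1]?), List.getElem?_inj hi hl,
    and_comm, eq_comm]

theorem swap_notMem_consecutivePairs (hl : l.Nodup) (h : (a, b) ∈ l.consecutivePairs) :
    (b, a) ∉ l.consecutivePairs := by
  intro h'
  obtain ⟨i, hi, rfl⟩ := List.getElem_of_mem (mem_of_mem_consecutivePairs h).1
  rw [getElem_mem_consecutivePairs_iff hl] at h
  obtain ⟨j, rfl, hj⟩ := (mem_consecutivePairs_getElem_iff hl hi).1 h'
  have := (List.getElem?_inj (by lia) hl).1 (hj.trans h.symm)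
  lia

end ConsecutivePairs

section Fan

variable {V : Type*} [DecidableEq V]

/-- In the weighted graph `W`, the vertices of the path `p` are joined by unit-weight edges to the
hub `r` and to their neighbours in `p`, and to nothing else. Nothing is required of the edges that
do not meet `p`. -/
structure IsFan (W : V → V → ℝ) (r : V) (p : List V) : Prop where
  nodup : p.Nodup
  hub_notMem : r ∉ p
  weight_eq : ∀ a ∈ p, ∀ b, W a b = (if b = r then 1 else 0) +
    if (a, b) ∈ p.consecutivePairs ∨ (b, a) ∈ p.consecutivePairs then 1 else 0

/-- The current that the potential `x` drives along the path `p` into its vertex number `i`; it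
vanishes for `i = 0` and for `i = p.length`, where no edge of `p` is crossed. -/
def linkCurrent (p : List V) (x : V → ℝ) : ℕ → ℝ
  | 0 => 0
  | i + 1 => if h : i + 1 < p.length then x p[i] - x p[i + 1] else 0

variable [Fintype V] {W : V → V → ℝ} {r : V} {p : List V} {x : V → ℝ} {i : ℕ}

theorem lapG_mulVec_apply {a : V} (ha : W a a = 0) :
    (lapG W *ᵥ x) a = ∑ b, W a b * (x a - x b) := by
  have hentry (b : V) :
      lapG W a b * x b = (if a = b then (∑ k, W a k) * x a else 0) - W a b * x b := by
    rw [lapG]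
    split_ifs with hab
    · rw [← hab, ha]
      ring
    · ring
  simp only [mulVec, dotProduct, hentry, Finset.sum_sub_distrib, Finset.sum_ite_eq,
    Finset.mem_univ, if_true, mul_sub, Finset.sum_mul]

theorem sum_ite_getElem_mem_consecutivePairs (hp : p.Nodup) (hi : i < p.length) :
    ∑ b, (if (p[i], b) ∈ p.consecutivePairs then x p[i] - x b else 0) =
      linkCurrent p x (i + 1) := by
  simp only [getElem_mem_consecutivePairs_iff hp hi, linkCurrent]
  split_ifs with hi'
  · simp [List.getElem?_eq_getElem hi']
  · simp [List.getElem?_eq_none (not_lt.1 hi')]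

theorem sum_ite_mem_consecutivePairs_getElem (hp : p.Nodup) (hi : i < p.length) :
    ∑ b, (if (b, p[i]) ∈ p.consecutivePairs then x p[i] - x b else 0) = -linkCurrent p x i := by
  classical
  simp only [mem_consecutivePairs_getElem_iff hp hi]
  cases i with
  | zero => simp [linkCurrent]
  | succ i => simp [linkCurrent, hi, List.getElem?_eq_getElem (Nat.lt_of_succ_lt hi)]

namespace IsFan

theorem lapG_mulVec_getElem (h : IsFan W r p) (hi : i < p.length) :
    (lapG W *ᵥ x) p[i] = x p[i] - x r + linkCurrent p x (i + 1) - linkCurrent p x i := by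
  have hmem : p[i] ∈ p := List.getElem_mem hi
  have hloop : (p[i], p[i]) ∉ p.consecutivePairs := fun hp ↦
    swap_notMem_consecutivePairs h.nodup hp hp
  have hdiag : W p[i] p[i] = 0 := by
    simp [h.weight_eq _ hmem, hloop, ne_of_mem_of_not_mem hmem h.hub_notMem]
  have hterm (b : V) : W p[i] b * (x p[i] - x b) = (if b = r then x p[i] - x b else 0) +
      (if (p[i], b) ∈ p.consecutivePairs then x p[i] - x b else 0) +
      (if (b, p[i]) ∈ p.consecutivePairs then x p[i] - x b else 0) := by
    have := swap_notMem_consecutivePairs (a := p[i]) (b := b) h.nodup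
    rw [h.weight_eq _ hmem]
    grind
  rw [lapG_mulVec_apply hdiag]
  simp only [hterm, Finset.sum_add_distrib, Finset.sum_ite_eq', Finset.mem_univ, if_true,
    sum_ite_getElem_mem_consecutivePairs h.nodup hi,
    sum_ite_mem_consecutivePairs_getElem h.nodup hi]
  ring

theorem isLadderFlow (h : IsFan W r p) (hp : p ≠ [])
    (hx : lapG W *ᵥ x = Pi.single (p.head hp) 1 - Pi.single (p.getLast hp) 1) :
    IsLadderFlow (fun i ↦ x (p.getD i r) - x r)
      (fun i ↦ linkCurrent p x i + if i = 0 ∨ i = p.length then 1 else 0) (p.length - 1) where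
  kirchhoff i hi := by
    have hlen : i < p.length := Nat.lt_of_le_sub_one (List.length_pos_iff.2 hp) hi
    have hrow := h.lapG_mulVec_getElem (x := x) hlen
    rw [hx, List.head_eq_getElem, List.getLast_eq_getElem] at hrow
    simp only [Pi.sub_apply, Pi.single_apply, h.nodup.getElem_inj_iff] at hrow
    rw [List.getD_eq_getElem _ _ hlen]
    grind
  ohm i hi := by
    have hlen : i + 1 < p.length := Nat.add_lt_of_lt_sub hi
    simp [linkCurrent, hlen, Nat.lt_of_succ_lt hlen, hlen.ne]

theorem head_sub_getLast_eq (h : IsFan W r p) (hp : p ≠ [])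
    (hx : lapG W *ᵥ x = Pi.single (p.head hp) 1 - Pi.single (p.getLast hp) 1) :
    x (p.head hp) - x (p.getLast hp) =
      2 * ((Nat.fib (2 * p.length - 1) : ℝ) - 1) / Nat.fib (2 * p.length) := by
  have hlen : 0 < p.length := List.length_pos_iff.2 hp
  have hflow := (h.isLadderFlow hp hx).fib_mul_pot_zero_sub_pot
  have hhead : p.getD 0 r = p.head hp := by simp [List.head_eq_getElem, hlen]
  have hlast : p.getD (p.length - 1) r = p.getLast hp := by simp [List.getLast_eq_getElem, hlen]
  have hzero : linkCurrent p x 0 = 0 := rfl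
  have hlength : linkCurrent p x p.length = 0 := by
    rw [← Nat.sub_add_cancel hlen]
    exact dif_neg (by lia)
  have hfib : (Nat.fib (2 * p.length) : ℝ) ≠ 0 :=
    Nat.cast_ne_zero.2 (Nat.fib_pos.2 (by lia)).ne'
  simp only [hhead, hlast, Nat.sub_add_cancel hlen, hzero, hlength, true_or, or_true, if_true,
    show 2 * (p.length - 1) + 2 = 2 * p.length by lia,
    show 2 * (p.length - 1) + 1 = 2 * p.length - 1 by lia] at hflow
  rw [eq_div_iff hfib]
  linear_combination hflow

end IsFan

theorem stmt9_general (h : IsFan W r p) (hp : p ≠ [])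
    (hx : lapG W *ᵥ x = Pi.single (p.head hp) 1 - Pi.single (p.getLast hp) 1) :
    (Pi.single (p.head hp) 1 - Pi.single (p.getLast hp) 1) ⬝ᵥ x < √5 - 1 := by
  have hlen : 0 < p.length := List.length_pos_iff.2 hp
  have hbound := two_mul_fib_sub_one_div_fib_succ_lt (2 * p.length - 1)
  rw [Nat.sub_add_cancel (by lia)] at hbound
  rwa [sub_dotProduct, single_one_dotProduct, single_one_dotProduct, h.head_sub_getLast_eq hp hx]

end Fan

namespace IsPathCover

variable {n : ℕ} {Ps : List (List (Fin n))} {p q : List (Fin n)} {a b : Fin n}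

theorem eq_of_mem_of_mem (h : IsPathCover n Ps) (hp : p ∈ Ps) (hq : q ∈ Ps)
    (hap : a ∈ p) (haq : a ∈ q) : p = q := by
  have : Std.Symm fun l₁ l₂ : List (Fin n) ↦ ∀ c ∈ l₁, c ∉ l₂ :=
    ⟨fun _ _ hdisj c hc hc' ↦ hdisj c hc' hc⟩
  by_contra hpq
  exact h.2.1.forall hp hq hpq a hap haq

theorem exists_mem_consecutivePairs_iff (h : IsPathCover n Ps) (hp : p ∈ Ps) (ha : a ∈ p) :
    (∃ l ∈ Ps, (a, b) ∈ l.consecutivePairs ∨ (b, a) ∈ l.consecutivePairs) ↔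
      (a, b) ∈ p.consecutivePairs ∨ (b, a) ∈ p.consecutivePairs := by
  refine ⟨?_, fun hab ↦ ⟨p, hp, hab⟩⟩
  rintro ⟨l, hl, hab⟩
  have hal : a ∈ l := hab.elim (fun hab ↦ (mem_of_mem_consecutivePairs hab).1)
    fun hba ↦ (mem_of_mem_consecutivePairs hba).2
  rwa [h.eq_of_mem_of_mem hp hl ha hal]

theorem isFan_starPlusPaths (h : IsPathCover n Ps) (hp : p ∈ Ps) :
    IsFan (starPlusPaths n Ps) (Fin.last n) (p.map Fin.castSucc) where
  nodup := (h.1 p hp).2.map (Fin.castSucc_injective n)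
  hub_notMem := by simp [Fin.castSucc_ne_last]
  weight_eq := by
    intro a' ha' b'
    obtain ⟨a, ha, rfl⟩ := List.mem_map.1 ha'
    cases b' using Fin.lastCases with
    | last =>
      have hleft : (a.castSucc, Fin.last n) ∉ (p.map Fin.castSucc).consecutivePairs := fun hmem ↦
        by simpa [Fin.castSucc_ne_last] using (mem_of_mem_consecutivePairs hmem).2
      have hright : (Fin.last n, a.castSucc) ∉ (p.map Fin.castSucc).consecutivePairs := fun hmem ↦
        by simpa [Fin.castSucc_ne_last] using (mem_of_mem_consecutivePairs hmem).1
      simp [starPlusPaths, starW, hleft, hright, Fin.castSucc_ne_last,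
        (Fin.castSucc_ne_last _).symm]
    | cast b =>
      simp [starPlusPaths, starW, Fin.castSucc_ne_last, ← h.exists_mem_consecutivePairs_iff hp ha,
        mem_consecutivePairs_map_iff (Fin.castSucc_injective n)]

end IsPathCover

theorem stmt9 (n : ℕ) (Ps : List (List (Fin n))) (hPs : IsPathCover n Ps)
    (u v : Fin n) (huv : u ≠ v)
    (huv' : ∃ p ∈ Ps, ∃ hp : p ≠ [], u = p.head hp ∧ v = p.getLast hp)
    (x : Fin (n + 1) → ℝ)
    (hx : (lapG (starPlusPaths n Ps)).mulVec x =
      Pi.single u.castSucc 1 - Pi.single v.castSucc 1) :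
    (Pi.single u.castSucc 1 - Pi.single v.castSucc 1) ⬝ᵥ x < Real.sqrt 5 - 1 := by
  obtain ⟨p, hp, hne, rfl, rfl⟩ := huv'
  simpa only [List.head_map, List.getLast_map] using stmt9_general (hPs.isFan_starPlusPaths hp)
    (mt List.map_eq_nil_iff.1 hne) (by simpa only [List.head_map, List.getLast_map] using hx)
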